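/- (Closed-loop exponential decay in the linear case θ = 0.) Suppose Assumption 1 holds with constant ω > 0. Let q > 0, A₁* := A₁ + qI₂, and let M ∈ C¹([0,1]; M₂(ℝ)) and N ∈ M₂(ℝ) satisfy M(0) = 0, ∫₀¹ K₁(ξ)M(ξ) dξ = I₂, and Λ M′(ξ) = (𝒦₃M) + HN on (0,1). Define ‖MᵀQ‖_∞ := sup_{ξ∈[0,1]} ‖M(ξ)ᵀQ(ξ)‖ (operator norm), γ₁ := (q/ω)‖G₁⁻¹A₁*‖²‖MᵀQ‖_∞², λ̄ := sup_{ξ∈[0,1]} λ_max(Q(ξ)), and γ := min{q, ω/λ̄}. Let T > 0, let X_δ ∈ C¹([0,T]; ℝ²), and let ζ : [0,1]×[0,T] → ℝ² be a C¹ function with ζ(0,t) = 0 satisfying the closed-loop system X_δ′(t) = −qX_δ(t) + G₁(𝒦₁ ζ(·,t)) and ∂ζ/∂t + Λ ∂ζ/∂ξ = (𝒦₃ ζ(·,t)) − H[(G₁⁻¹A₁*G₁)ᵀ(𝒦_M ζ(·,t)) + γ₁G₁ᵀX_δ(t)] + M(ξ)·G₁⁻¹A₁*[G₁(𝒦₁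 ζ(·,t)) − qX_δ(t)] on (0,1)×(0,T), where (𝒦_M ζ(·,t)) := ∫₀¹ M(ξ)ᵀQ(ξ)ζ(ξ,t) dξ. Then the Lyapunov functional V(t) := (1/2)‖X_δ(t)‖² + (1/(2γ₁))∫₀¹ ζ(ξ,t)ᵀQ(ξ)ζ(ξ,t) dξ satisfies V(t) ≤ V(0)·e^{−γt} for all t ∈ [0,T]. -/

import Mathlib

open MeasureTheory Matrix Set

noncomputable section

attribute [local instance] Matrix.normedAddCommGroup Matrix.normedSpace

abbrev Vec2 := Fin 2 → ℝ
abbrev Mat2 := Matrix (Fin 2) (Fin 2) ℝ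

/-- Nondimensional pressure distribution `p̄(ξ) = (a/(1-e^{-a})) e^{-aξ}`. -/
def pbar (a ξ : ℝ) : ℝ := a / (1 - Real.exp (-a)) * Real.exp (-a * ξ)

/-- The physical parameters of the single-track tire model. -/
structure TireParams where
  vx : ℝ
  L1 : ℝ
  L2 : ℝ
  Fz1 : ℝ
  Fz2 : ℝ
  σ1 : ℝ
  σ2 : ℝ
  a1 : ℝ
  a2 : ℝ
  φ1 : ℝ
  φ2 : ℝ
  vx_pos : 0 < vx
  L1_pos : 0 < L1
  L2_pos : 0 < L2
  Fz1_pos : 0 < Fz1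
  Fz2_pos : 0 < Fz2
  σ1_pos : 0 < σ1
  σ2_pos : 0 < σ2
  a1_pos : 0 < a1
  a2_pos : 0 < a2
  φ1_mem : φ1 ∈ Set.Ioc (0:ℝ) 1
  φ2_mem : φ2 ∈ Set.Ioc (0:ℝ) 1

namespace TireParams

variable (P : TireParams)

def ψ1 : ℝ := 1 - P.φ1
def ψ2 : ℝ := 1 - P.φ2

def Λmat : Mat2 := Matrix.diagonal ![P.vx / P.L1, P.vx / P.L2]

def Hmat : Mat2 := (2:ℝ) • Matrix.diagonal ![P.φ1, P.φ2]

def K1 (ξ : ℝ) : Mat2 :=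
  Matrix.diagonal ![P.Fz1 * P.σ1 * pbar P.a1 ξ, P.Fz2 * P.σ2 * pbar P.a2 ξ]

def K2 (ξ : ℝ) : Mat2 :=
  -Matrix.diagonal ![P.ψ1 * pbar P.a1 ξ, P.ψ2 * pbar P.a2 ξ]

def K3 (ξ : ℝ) : Mat2 :=
  -P.vx • Matrix.diagonal ![P.ψ1 / P.L1 * deriv (pbar P.a1) ξ, P.ψ2 / P.L2 * deriv (pbar P.a2) ξ]

def K4 : Mat2 :=
  P.vx • Matrix.diagonal ![P.ψ1 / P.L1 * pbar P.a1 1, P.ψ2 / P.L2 * pbar P.a2 1]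

def Q (ξ : ℝ) : Mat2 := P.K1 ξ * (P.Hmat)⁻¹

/-- `(𝒦ζ) = ∫₀¹ K(ξ) ζ(ξ) dξ`. -/
def Kop (K : ℝ → Mat2) (ζ : ℝ → Vec2) : Vec2 := ∫ ξ in (0:ℝ)..1, (K ξ).mulVec (ζ ξ)

def K1op (ζ : ℝ → Vec2) : Vec2 := Kop P.K1 ζ

def K2op (ζ : ℝ → Vec2) : Vec2 := Kop P.K2 ζ

/-- `(𝒦₃ζ) = ∫₀¹ K₃(ξ)ζ(ξ)dξ + K₄ ζ(1)`. -/
def K3op (ζ : ℝ → Vec2) : Vec2 := Kop P.K3 ζ + (P.K4).mulVec (ζ 1)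

/-- `(𝒜ζ)(ξ) = -Λ ζ'(ξ) + (𝒦₃ζ)`, expressed through a given derivative `ζ'`. -/
def Aop (ζ ζ' : ℝ → Vec2) (ξ : ℝ) : Vec2 := -(P.Λmat).mulVec (ζ' ξ) + P.K3op ζ

end TireParams

/-- `ζ` is C¹ on `[0,1]` with derivative `ζ'`. -/
def IsC1On01 (ζ ζ' : ℝ → Vec2) : Prop :=
  (∀ ξ ∈ Icc (0:ℝ) 1, HasDerivWithinAt ζ (ζ' ξ) (Icc (0:ℝ) 1) ξ) ∧
    ContinuousOn ζ' (Icc (0:ℝ) 1)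

/-- Square integrability on `(0,1)`. -/
def SqIntegrableOn01 (ζ : ℝ → Vec2) : Prop :=
  Measurable ζ ∧ IntervalIntegrable (fun ξ => ∑ i, (ζ ξ i) ^ 2) volume 0 1

/-- Assumption 1 (strict dissipativity of `𝒜`). -/
def Assumption1 (P : TireParams) (ω : ℝ) : Prop :=
  ∀ ζ ζ' : ℝ → Vec2, IsC1On01 ζ ζ' → ζ 0 = 0 →
    (∫ ξ in (0:ℝ)..1, P.Aop ζ ζ' ξ ⬝ᵥ (P.Q ξ).mulVec (ζ ξ)) ≤
      -ω * ∫ ξ in (0:ℝ)..1, ∑ i, (ζ ξ i) ^ 2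

/-- Assumption 2 (dissipativity of the source `Σ`). -/
def Assumption2 (P : TireParams) (S : Vec2 → Mat2) : Prop :=
  ∀ y : Vec2, ∀ ζ : ℝ → Vec2, SqIntegrableOn01 ζ →
    (∫ ξ in (0:ℝ)..1, ζ ξ ⬝ᵥ (P.Q ξ).mulVec ((S y).mulVec (ζ ξ + P.K2op ζ))) ≤ 0

/-- Matrix-valued `M` is C¹ on `[0,1]` with derivative `M'`. -/
def IsC1MatOn01 (M M' : ℝ → Mat2) : Prop :=
  (∀ ξ ∈ Icc (0:ℝ) 1, HasDerivWithinAt M (M' ξ) (Icc (0:ℝ) 1) ξ) ∧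
    ContinuousOn M' (Icc (0:ℝ) 1)

def A1mat (vx : ℝ) : Mat2 := !![0, -vx; 0, 0]

def G1mat (m Iz l1 l2 : ℝ) : Mat2 := -!![1/m, 1/m; l1/Iz, -l2/Iz]

/-- `(𝒦M) = ∫₀¹ K(ξ)M(ξ)dξ` for matrix-valued `M`. -/
def KopM (K : ℝ → Mat2) (M : ℝ → Mat2) : Mat2 := ∫ ξ in (0:ℝ)..1, K ξ * M ξ

/-- Operator norm on 2×2 real matrices induced by the Euclidean norm. -/
def opNorm2 (A : Mat2) : ℝ := ‖Matrix.toEuclideanCLM (𝕜 := ℝ) A‖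

/-- `(𝒦_M ζ) = ∫₀¹ M(ξ)ᵀ Q(ξ) ζ(ξ) dξ`. -/
def KMop (P : TireParams) (M : ℝ → Mat2) (ζ : ℝ → Vec2) : Vec2 :=
  ∫ ξ in (0:ℝ)..1, ((M ξ)ᵀ * P.Q ξ).mulVec (ζ ξ)

/-- Diagonal of `Q`. -/
def qd (P : TireParams) (ξ : ℝ) : Fin 2 → ℝ :=
  ![P.Fz1 * P.σ1 * pbar P.a1 ξ / (2 * P.φ1), P.Fz2 * P.σ2 * pbar P.a2 ξ / (2 * P.φ2)]

lemma Q_eq (P : TireParams) (ξ : ℝ) : P.Q ξ = Matrix.diagonal (qd P ξ) := by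
  have h1 := P.φ1_mem.1
  have h2 := P.φ2_mem.1
  have hH : (P.Hmat)⁻¹ = Matrix.diagonal ![1 / (2 * P.φ1), 1 / (2 * P.φ2)] := by
    apply Matrix.inv_eq_right_inv
    ext i j
    fin_cases i <;> fin_cases j <;> simp [TireParams.Hmat, Matrix.mul_apply, Fin.sum_univ_two]
      <;> field_simp
  rw [TireParams.Q, hH, TireParams.K1]
  ext i j
  fin_cases i <;> fin_cases j <;> simp [qd, Matrix.mul_apply, Fin.sum_univ_two]
    <;> field_simp

lemma pbar_pos {a : ℝ} (ha : 0 < a) (ξ : ℝ) : 0 < pbar a ξ := by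
  unfold pbar
  have : Real.exp (-a) < 1 := by simpa using ha
  have := Real.exp_pos (-a * ξ)
  have : 0 < 1 - Real.exp (-a) := by linarith
  positivity

lemma pbar_le {a : ℝ} (ha : 0 < a) {ξ : ℝ} (h : 0 ≤ ξ) : pbar a ξ ≤ pbar a 0 := by
  unfold pbar
  have : Real.exp (-a) < 1 := by simpa using ha
  have : 0 < 1 - Real.exp (-a) := by linarith
  have h2 : Real.exp (-a * ξ) ≤ Real.exp (-a * 0) := by
    apply Real.exp_le_exp.2
    nlinarith
  gcongr

lemma pbar_cont (a : ℝ) : Continuous (pbar a) := by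
  unfold pbar
  fun_prop

lemma qd_pos (P : TireParams) (ξ : ℝ) (i : Fin 2) : 0 < qd P ξ i := by
  have h1 := P.φ1_mem.1
  have h2 := P.φ2_mem.1
  have := P.Fz1_pos
  have := P.Fz2_pos
  have := P.σ1_pos
  have := P.σ2_pos
  have := pbar_pos P.a1_pos ξ
  have := pbar_pos P.a2_pos ξ
  fin_cases i <;> simp [qd] <;> positivity

lemma qd_le (P : TireParams) {ξ : ℝ} (h : 0 ≤ ξ) (i : Fin 2) : qd P ξ i ≤ qd P 0 i := by
  have h1 := P.φ1_mem.1
  have h2 := P.φ2_mem.1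
  have := P.Fz1_pos
  have := P.Fz2_pos
  have := P.σ1_pos
  have := P.σ2_pos
  have := pbar_le P.a1_pos h
  have := pbar_le P.a2_pos h
  fin_cases i <;> simp [qd] <;> gcongr

lemma qd_cont (P : TireParams) (i : Fin 2) : Continuous (fun ξ => qd P ξ i) := by
  have := pbar_cont P.a1
  have := pbar_cont P.a2
  fin_cases i <;> simp [qd] <;> fun_prop

lemma qd_le_lamBar (P : TireParams) {ξ : ℝ} (h : ξ ∈ Icc (0:ℝ) 1) (i : Fin 2) :
    qd P ξ i ≤ sSup ((fun ξ => sSup (spectrum ℝ (P.Q ξ))) '' Icc (0:ℝ) 1) := by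
  have hs : ∀ ξ, spectrum ℝ (P.Q ξ) = Set.range (qd P ξ) := by
    intro ξ
    rw [Q_eq, spectrum_diagonal]
  have h1 : qd P ξ i ≤ sSup (spectrum ℝ (P.Q ξ)) := by
    rw [hs]
    exact le_csSup (Set.finite_range _).bddAbove ⟨i, rfl⟩
  refine h1.trans (le_csSup ?_ ⟨ξ, h, rfl⟩)
  refine ⟨qd P 0 0 + qd P 0 1, ?_⟩
  rintro _ ⟨x, hx, rfl⟩
  simp only
  rw [hs]
  apply csSup_le (Set.range_nonempty _)
  rintro _ ⟨j, rfl⟩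
  have := qd_le P hx.1 j
  have := qd_pos P 0 0
  have := qd_pos P 0 1
  fin_cases j <;> simp at * <;> linarith

lemma opNorm2_bound (A : Mat2) (x : Vec2) :
    (A *ᵥ x) ⬝ᵥ (A *ᵥ x) ≤ opNorm2 A ^ 2 * (x ⬝ᵥ x) := by
  have h := (Matrix.toEuclideanCLM (𝕜 := ℝ) A).le_opNorm (WithLp.toLp 2 x)
  have h2 := pow_le_pow_left₀ (norm_nonneg _) h 2
  rw [mul_pow, EuclideanSpace.norm_sq_eq, EuclideanSpace.norm_sq_eq] at h2
  simp only [opNorm2, dotProduct, Fin.sum_univ_two, Real.norm_eq_abs, sq_abs,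
    Matrix.toEuclideanCLM_toLp] at h2 ⊢
  simpa [← pow_two] using h2

lemma opNorm2_pos {A : Mat2} (h : A ≠ 0) : 0 < opNorm2 A := by
  unfold opNorm2
  rw [norm_pos_iff]
  simpa using h

lemma opNorm2_cont : Continuous opNorm2 := by
  unfold opNorm2
  have : Continuous (Matrix.toEuclideanCLM (n := Fin 2) (𝕜 := ℝ)).toAlgEquiv.toLinearMap :=
    LinearMap.continuous_of_finiteDimensional _
  exact this.norm

lemma cont_comp {z : ℝ → Vec2} {s : Set ℝ} (h : ContinuousOn z s) (i : Fin 2) :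
    ContinuousOn (fun x => z x i) s := (continuousOn_pi.1 h) i

lemma contM_comp {M : ℝ → Mat2} {s : Set ℝ} (h : ContinuousOn M s) (i j : Fin 2) :
    ContinuousOn (fun x => M x i j) s := (continuousOn_pi.1 ((continuousOn_pi.1 h) i)) j

lemma dot_integral (u : Vec2) {f : ℝ → Vec2} (hf : ContinuousOn f (Icc (0:ℝ) 1)) :
    u ⬝ᵥ (∫ ξ in (0:ℝ)..1, f ξ) = ∫ ξ in (0:ℝ)..1, u ⬝ᵥ f ξ := by
  have hi : IntervalIntegrable f volume 0 1 := hf.intervalIntegrable_of_Icc zero_le_one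
  let L : Vec2 →L[ℝ] ℝ := u 0 • ContinuousLinearMap.proj 0 + u 1 • ContinuousLinearMap.proj 1
  have hL : ∀ v, L v = u ⬝ᵥ v := by
    intro v
    simp [L, dotProduct, Fin.sum_univ_two]
  have := L.intervalIntegral_comp_comm hi
  simp only [hL] at this
  exact this.symm

lemma contQz (P : TireParams) {z : ℝ → Vec2} (hz : ContinuousOn z (Icc (0:ℝ) 1)) :
    ContinuousOn (fun ξ => (P.Q ξ) *ᵥ (z ξ)) (Icc (0:ℝ) 1) := by
  rw [continuousOn_pi]
  intro i
  have := (qd_cont P i).continuousOn (s := Icc (0:ℝ) 1)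
  have := cont_comp hz i
  simp only [Q_eq, Matrix.mulVec_diagonal]
  fun_prop

lemma contDot {y z : ℝ → Vec2} {s : Set ℝ} (hy : ContinuousOn y s) (hz : ContinuousOn z s) :
    ContinuousOn (fun ξ => y ξ ⬝ᵥ z ξ) s := by
  have := cont_comp hz 0
  have := cont_comp hz 1
  have := cont_comp hy 0
  have := cont_comp hy 1
  simp only [dotProduct, Fin.sum_univ_two]
  fun_prop

lemma contMulVec {M : ℝ → Mat2} {z : ℝ → Vec2} {s : Set ℝ} (hM : ContinuousOn M s)
    (hz : ContinuousOn z s) : ContinuousOn (fun ξ => M ξ *ᵥ z ξ) s := by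
  rw [continuousOn_pi]
  intro i
  exact contDot (y := fun x => M x i) ((continuousOn_pi.1 hM) i) hz

lemma contTr {M : ℝ → Mat2} {s : Set ℝ} (hM : ContinuousOn M s) :
    ContinuousOn (fun ξ => (M ξ)ᵀ) s :=
  continuousOn_pi.2 fun i => continuousOn_pi.2 fun j => contM_comp hM j i

lemma contQ (P : TireParams) : Continuous P.Q := by
  refine continuous_pi fun i => continuous_pi fun j => ?_
  have h0 := qd_cont P i
  simp only [Q_eq, Matrix.diagonal_apply]
  by_cases h : i = j
  · simpa [h] using qd_cont P j
  · simp only [h, if_false]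
    fun_prop

lemma contK1 (P : TireParams) : Continuous P.K1 := by
  refine continuous_pi fun i => continuous_pi fun j => ?_
  have := pbar_cont P.a1
  have := pbar_cont P.a2
  fin_cases i <;> fin_cases j <;> simp [TireParams.K1] <;> fun_prop

lemma Q_H (P : TireParams) (ξ : ℝ) (w z : Vec2) :
    (P.Hmat *ᵥ w) ⬝ᵥ (P.Q ξ *ᵥ z) = w ⬝ᵥ (P.K1 ξ *ᵥ z) := by
  have h1 := P.φ1_mem.1
  have h2 := P.φ2_mem.1
  rw [Q_eq]
  simp [TireParams.Hmat, TireParams.K1, qd, dotProduct, Fin.sum_univ_two,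
    Matrix.mulVec_diagonal, Matrix.smul_mulVec]
  field_simp

lemma M_Q (A B : Mat2) (u z : Vec2) :
    (A *ᵥ u) ⬝ᵥ (B *ᵥ z) = u ⬝ᵥ ((Aᵀ * B) *ᵥ z) := by
  simp [dotProduct, Fin.sum_univ_two, Matrix.mulVec, Matrix.mul_apply]
  ring

lemma contMQ (P : TireParams) {M : ℝ → Mat2} (hM : ContinuousOn M (Icc (0:ℝ) 1)) :
    ContinuousOn (fun ξ => (M ξ)ᵀ * P.Q ξ) (Icc (0:ℝ) 1) :=
  Continuous.comp_continuousOn (f := fun ξ => ((M ξ)ᵀ, P.Q ξ))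
    (g := fun p : Mat2 × Mat2 => p.1 * p.2) (by fun_prop)
    ((contTr hM).prodMk (contQ P).continuousOn)

lemma energy_split (P : TireParams) (M : ℝ → Mat2) (z z' zt : ℝ → Vec2) (w u : Vec2)
    (hM : ContinuousOn M (Icc (0:ℝ) 1)) (hz : ContinuousOn z (Icc (0:ℝ) 1))
    (hz' : ContinuousOn z' (Icc (0:ℝ) 1))
    (h : ∀ ξ ∈ Ioo (0:ℝ) 1, zt ξ = P.Aop z z' ξ - P.Hmat *ᵥ w + M ξ *ᵥ u) :
    (∫ ξ in (0:ℝ)..1, zt ξ ⬝ᵥ (P.Q ξ *ᵥ z ξ)) =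
      (∫ ξ in (0:ℝ)..1, P.Aop z z' ξ ⬝ᵥ (P.Q ξ *ᵥ z ξ)) - w ⬝ᵥ P.K1op z + u ⬝ᵥ KMop P M z := by
  have hA : ContinuousOn (fun ξ => P.Aop z z' ξ) (Icc (0:ℝ) 1) := by
    unfold TireParams.Aop
    exact ((contMulVec continuousOn_const hz').neg).add continuousOn_const
  have hQz := contQz P hz
  have hK1 := contMulVec (contK1 P).continuousOn hz
  have hMQ := contMulVec (contMQ P hM) hz
  have e1 : (∫ ξ in (0:ℝ)..1, zt ξ ⬝ᵥ (P.Q ξ *ᵥ z ξ)) =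
      ∫ ξ in (0:ℝ)..1, (P.Aop z z' ξ ⬝ᵥ (P.Q ξ *ᵥ z ξ) - w ⬝ᵥ (P.K1 ξ *ᵥ z ξ)
        + u ⬝ᵥ (((M ξ)ᵀ * P.Q ξ) *ᵥ z ξ)) := by
    rw [intervalIntegral.integral_of_le zero_le_one, intervalIntegral.integral_of_le zero_le_one,
      integral_Ioc_eq_integral_Ioo, integral_Ioc_eq_integral_Ioo]
    apply setIntegral_congr_fun measurableSet_Ioo
    intro ξ hξ
    simp only
    rw [h ξ hξ, add_dotProduct, sub_dotProduct, Q_H, M_Q]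
  have i1 : IntervalIntegrable (fun ξ => P.Aop z z' ξ ⬝ᵥ (P.Q ξ *ᵥ z ξ)) volume 0 1 :=
    (contDot hA hQz).intervalIntegrable_of_Icc zero_le_one
  have i2 : IntervalIntegrable (fun ξ => w ⬝ᵥ (P.K1 ξ *ᵥ z ξ)) volume 0 1 :=
    (contDot continuousOn_const hK1).intervalIntegrable_of_Icc zero_le_one
  have i3 : IntervalIntegrable (fun ξ => u ⬝ᵥ (((M ξ)ᵀ * P.Q ξ) *ᵥ z ξ)) volume 0 1 :=
    (contDot continuousOn_const hMQ).intervalIntegrable_of_Icc zero_le_one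
  rw [e1, intervalIntegral.integral_add (i1.sub i2) i3, intervalIntegral.integral_sub i1 i2,
    TireParams.K1op, TireParams.Kop, KMop, dot_integral w hK1, dot_integral u hMQ]

lemma young (q ω b m2 : ℝ) (s r z x : Vec2) (hω : 0 < ω) (hm : 0 < m2)
    (hs : s ⬝ᵥ s ≤ m2 * (z ⬝ᵥ z)) (hr : r ⬝ᵥ r ≤ b * (x ⬝ᵥ x)) :
    -q * (r ⬝ᵥ s) ≤ ω / 2 * (z ⬝ᵥ z) + q ^ 2 * m2 * b / (2 * ω) * (x ⬝ᵥ x) := by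
  have h1 : ω / (2 * m2) * (s ⬝ᵥ s) ≤ ω / 2 * (z ⬝ᵥ z) := by
    calc _ ≤ ω / (2 * m2) * (m2 * (z ⬝ᵥ z)) := by gcongr
      _ = _ := by field_simp
  have h2 : q ^ 2 * m2 / (2 * ω) * (r ⬝ᵥ r) ≤ q ^ 2 * m2 * b / (2 * ω) * (x ⬝ᵥ x) := by
    calc _ ≤ q ^ 2 * m2 / (2 * ω) * (b * (x ⬝ᵥ x)) := by gcongr
      _ = _ := by ring
  have h3 : 0 ≤ ω / (2 * m2) * ((s + (q * m2 / ω) • r) ⬝ᵥ (s + (q * m2 / ω) • r)) := by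
    apply mul_nonneg (by positivity)
    simp only [dotProduct, Fin.sum_univ_two]
    nlinarith [mul_self_nonneg ((s + (q * m2 / ω) • r) 0), mul_self_nonneg ((s + (q * m2 / ω) • r) 1)]
  have h4 : ω / (2 * m2) * ((s + (q * m2 / ω) • r) ⬝ᵥ (s + (q * m2 / ω) • r)) =
      ω / (2 * m2) * (s ⬝ᵥ s) + q ^ 2 * m2 / (2 * ω) * (r ⬝ᵥ r) + q * (r ⬝ᵥ s) := by
    simp [dotProduct, Fin.sum_univ_two]
    field_simp
    ring
  linarith

lemma energy_ineq (P : TireParams) (M : ℝ → Mat2) (z z' zt : ℝ → Vec2) (X : Vec2)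
    (G B : Mat2) (ω q b m2 γ₁ lam γ : ℝ) (hω : 0 < ω) (hq : 0 < q) (hm2 : 0 < m2) (hb : 0 < b)
    (hγ₁ : γ₁ = q / ω * b * m2) (h1 : Assumption1 P ω)
    (hM : ContinuousOn M (Icc (0:ℝ) 1)) (hz : IsC1On01 z z') (hz0 : z 0 = 0)
    (hB : ∀ x, (B *ᵥ x) ⬝ᵥ (B *ᵥ x) ≤ b * (x ⬝ᵥ x))
    (hMQ : ∀ ξ ∈ Icc (0:ℝ) 1, ∀ x, (((M ξ)ᵀ * P.Q ξ) *ᵥ x) ⬝ᵥ (((M ξ)ᵀ * P.Q ξ) *ᵥ x)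
      ≤ m2 * (x ⬝ᵥ x))
    (hlam : ∀ ξ ∈ Icc (0:ℝ) 1, ∀ i, qd P ξ i ≤ lam) (hγ : γ = min q (ω / lam))
    (h : ∀ ξ ∈ Ioo (0:ℝ) 1, zt ξ + P.Λmat *ᵥ z' ξ = P.K3op z
      - P.Hmat *ᵥ ((B * G)ᵀ *ᵥ (KMop P M z) + γ₁ • Gᵀ *ᵥ X)
      + M ξ *ᵥ (B *ᵥ (G *ᵥ (P.K1op z) - q • X))) :
    X ⬝ᵥ (-q • X + G *ᵥ P.K1op z) + 1 / γ₁ * (∫ ξ in (0:ℝ)..1, zt ξ ⬝ᵥ (P.Q ξ *ᵥ z ξ)) ≤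
      -γ * (1 / 2 * (X ⬝ᵥ X) + 1 / (2 * γ₁) * ∫ ξ in (0:ℝ)..1, z ξ ⬝ᵥ (P.Q ξ *ᵥ z ξ)) := by
  have hγ₁p : 0 < γ₁ := by rw [hγ₁]; positivity
  have hlamp : 0 < lam := (qd_pos P 0 0).trans_le (hlam 0 (by simp) 0)
  have hzc : ContinuousOn z (Icc (0:ℝ) 1) := fun x hx => (hz.1 x hx).continuousWithinAt
  have hsplit := energy_split P M z z' zt _ _ hM hzc hz.2 (fun ξ hξ => by
    rw [TireParams.Aop]
    have := h ξ hξ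
    rw [← sub_eq_zero] at this ⊢
    rw [← this]
    abel)
  have hA := h1 z z' hz hz0
  have hzz : ∀ ξ, ∑ i, (z ξ i) ^ 2 = z ξ ⬝ᵥ z ξ := by
    intro ξ
    simp [dotProduct, pow_two]
  simp only [hzz] at hA
  set Z := ∫ ξ in (0:ℝ)..1, z ξ ⬝ᵥ z ξ with hZ
  set κ := KMop P M z with hκ
  set Y := P.K1op z with hY
  have izz : IntervalIntegrable (fun ξ => z ξ ⬝ᵥ z ξ) volume 0 1 :=
    (contDot hzc hzc).intervalIntegrable_of_Icc zero_le_one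
  have hcross : -q * ((B *ᵥ X) ⬝ᵥ κ) ≤ ω / 2 * Z + γ₁ * q / 2 * (X ⬝ᵥ X) := by
    have hMQc := contMulVec (contMQ P hM) hzc
    rw [hκ, KMop, dot_integral _ hMQc, ← intervalIntegral.integral_const_mul]
    have e : ω / 2 * Z + γ₁ * q / 2 * (X ⬝ᵥ X) =
        ∫ ξ in (0:ℝ)..1, (ω / 2 * (z ξ ⬝ᵥ z ξ) + γ₁ * q / 2 * (X ⬝ᵥ X)) := by
      rw [intervalIntegral.integral_add (izz.const_mul _) (by simp),
        intervalIntegral.integral_const_mul]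
      simp [hZ]
    rw [e]
    apply intervalIntegral.integral_mono_on zero_le_one
    · exact ((contDot continuousOn_const hMQc).intervalIntegrable_of_Icc zero_le_one).const_mul _
    · exact (izz.const_mul _).add (by simp)
    · intro ξ hξ
      have := young q ω b m2 _ _ (z ξ) X hω hm2 (hMQ ξ hξ (z ξ)) (hB X)
      refine this.trans (le_of_eq ?_)
      rw [hγ₁]
      ring
  have hQ : (∫ ξ in (0:ℝ)..1, z ξ ⬝ᵥ (P.Q ξ *ᵥ z ξ)) ≤ lam * Z := by
    rw [hZ, ← intervalIntegral.integral_const_mul]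
    apply intervalIntegral.integral_mono_on zero_le_one
    · exact (contDot hzc (contQz P hzc)).intervalIntegrable_of_Icc zero_le_one
    · exact izz.const_mul _
    · intro ξ hξ
      have a0 := hlam ξ hξ 0
      have a1 := hlam ξ hξ 1
      rw [Q_eq]
      simp only [dotProduct, Fin.sum_univ_two, Matrix.mulVec_diagonal]
      nlinarith [mul_nonneg (sub_nonneg.2 a0) (mul_self_nonneg (z ξ 0)),
        mul_nonneg (sub_nonneg.2 a1) (mul_self_nonneg (z ξ 1))]
  set E := ∫ ξ in (0:ℝ)..1, z ξ ⬝ᵥ (P.Q ξ *ᵥ z ξ) with hE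
  have hD : (∫ ξ in (0:ℝ)..1, zt ξ ⬝ᵥ (P.Q ξ *ᵥ z ξ)) ≤
      -ω * Z - γ₁ * (X ⬝ᵥ (G *ᵥ Y)) - q * ((B *ᵥ X) ⬝ᵥ κ) := by
    rw [hsplit]
    have : ((B * G)ᵀ *ᵥ κ + γ₁ • Gᵀ *ᵥ X) ⬝ᵥ Y =
        (B *ᵥ (G *ᵥ Y)) ⬝ᵥ κ + γ₁ * (X ⬝ᵥ (G *ᵥ Y)) := by
      simp [dotProduct, Fin.sum_univ_two, Matrix.mulVec, Matrix.mul_apply]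
      ring
    rw [this, Matrix.mulVec_sub, sub_dotProduct, Matrix.mulVec_smul, smul_dotProduct, smul_eq_mul]
    linarith
  set D := ∫ ξ in (0:ℝ)..1, zt ξ ⬝ᵥ (P.Q ξ *ᵥ z ξ) with hDd
  have hXX : 0 ≤ X ⬝ᵥ X := by
    simp only [dotProduct, Fin.sum_univ_two]
    nlinarith [mul_self_nonneg (X 0), mul_self_nonneg (X 1)]
  have hEn : 0 ≤ E := by
    apply intervalIntegral.integral_nonneg zero_le_one
    intro ξ hξ
    rw [Q_eq]
    simp only [dotProduct, Fin.sum_univ_two, Matrix.mulVec_diagonal]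
    nlinarith [mul_nonneg (qd_pos P ξ 0).le (mul_self_nonneg (z ξ 0)),
        mul_nonneg (qd_pos P ξ 1).le (mul_self_nonneg (z ξ 1))]
  have hg1 : γ ≤ q := hγ ▸ min_le_left _ _
  have hg2 : γ ≤ ω / lam := hγ ▸ min_le_right _ _
  have hg2 : γ * lam ≤ ω := (le_div_iff₀ hlamp).1 hg2
  have hgp : 0 < γ := by rw [hγ]; exact lt_min hq (by positivity)
  have hD2 : D ≤ -ω / 2 * Z - γ₁ * (X ⬝ᵥ (G *ᵥ Y)) + γ₁ * q / 2 * (X ⬝ᵥ X) := by linarith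
  have hZE : γ * E ≤ ω * Z := by
    have hZn : 0 ≤ Z := by
      by_contra hc
      nlinarith
    nlinarith
  have h5 : 1 / γ₁ * D ≤ 1 / γ₁ * (-γ * E / 2 - γ₁ * (X ⬝ᵥ (G *ᵥ Y)) + γ₁ * q / 2 * (X ⬝ᵥ X)) := by
    gcongr
    linarith
  have h6 : 1 / γ₁ * (-γ * E / 2 - γ₁ * (X ⬝ᵥ (G *ᵥ Y)) + γ₁ * q / 2 * (X ⬝ᵥ X)) =
    -γ * (1 / (2 * γ₁) * E) - (X ⬝ᵥ (G *ᵥ Y)) + q / 2 * (X ⬝ᵥ X) := by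
    field_simp
  rw [dotProduct_add, dotProduct_smul, smul_eq_mul]
  nlinarith

lemma contDotQ {α : Type*} [TopologicalSpace α] (P : TireParams) {y z : α → Vec2} {g : α → ℝ}
    {s : Set α} (hg : Continuous g) (hy : ContinuousOn y s) (hz : ContinuousOn z s) :
    ContinuousOn (fun p => y p ⬝ᵥ (P.Q (g p) *ᵥ z p)) s := by
  have h0 := continuousOn_pi.1 hz 0
  have h1 := continuousOn_pi.1 hz 1
  have h2 := continuousOn_pi.1 hy 0
  have h3 := continuousOn_pi.1 hy 1
  have h4 : ContinuousOn (fun p => qd P (g p) 0) s := ((qd_cont P 0).comp hg).continuousOn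
  have h5 : ContinuousOn (fun p => qd P (g p) 1) s := ((qd_cont P 1).comp hg).continuousOn
  simp only [Q_eq, dotProduct, Fin.sum_univ_two, Matrix.mulVec_diagonal]
  fun_prop

lemma energy_cont (P : TireParams) (T : ℝ) (ζ : ℝ → ℝ → Vec2)
    (hζc : ContinuousOn (fun p : ℝ × ℝ => ζ p.1 p.2) (Icc (0:ℝ) 1 ×ˢ Icc (0:ℝ) T)) :
    ContinuousOn (fun t => ∫ ξ in (0:ℝ)..1, ζ ξ t ⬝ᵥ (P.Q ξ *ᵥ ζ ξ t)) (Icc 0 T) := by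
  have hF := contDotQ P (g := fun p : ℝ × ℝ => p.1) continuous_fst hζc hζc
  obtain ⟨C, hC⟩ := (isCompact_Icc.prod isCompact_Icc).exists_bound_of_continuousOn hF
  have hsl : ∀ t ∈ Icc (0:ℝ) T, ContinuousOn (fun ξ => ζ ξ t ⬝ᵥ (P.Q ξ *ᵥ ζ ξ t)) (Icc 0 1) :=
    fun t ht => hF.comp (f := fun ξ : ℝ => (ξ, t)) (by fun_prop) (fun ξ hξ => ⟨hξ, ht⟩)
  intro t ht
  apply intervalIntegral.continuousWithinAt_of_dominated_interval (bound := fun _ => C)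
  · filter_upwards [self_mem_nhdsWithin] with t ht
    rw [uIoc_of_le zero_le_one]
    exact ((hsl t ht).mono Ioc_subset_Icc_self).aestronglyMeasurable measurableSet_Ioc
  · filter_upwards [self_mem_nhdsWithin] with t ht
    refine Filter.Eventually.of_forall fun ξ hξ => ?_
    rw [uIoc_of_le zero_le_one] at hξ
    exact hC (ξ, t) ⟨Ioc_subset_Icc_self hξ, ht⟩
  · simp
  · refine Filter.Eventually.of_forall fun ξ hξ => ?_
    rw [uIoc_of_le zero_le_one] at hξ
    exact (hF.comp (f := fun t : ℝ => (ξ, t)) (s := Icc 0 T) (by fun_prop)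
      (fun t ht => ⟨Ioc_subset_Icc_self hξ, ht⟩)) t ht

lemma energy_deriv (P : TireParams) (T : ℝ) (ζ ζt : ℝ → ℝ → Vec2)
    (hζc : ContinuousOn (fun p : ℝ × ℝ => ζ p.1 p.2) (Icc (0:ℝ) 1 ×ˢ Icc (0:ℝ) T))
    (hζtc : ContinuousOn (fun p : ℝ × ℝ => ζt p.1 p.2) (Icc (0:ℝ) 1 ×ˢ Icc (0:ℝ) T))
    (hζt : ∀ ξ ∈ Icc (0:ℝ) 1, ∀ t ∈ Icc (0:ℝ) T,
      HasDerivWithinAt (fun s => ζ ξ s) (ζt ξ t) (Icc (0:ℝ) T) t) :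
    ∀ t ∈ Ioo (0:ℝ) T, HasDerivAt (fun t => ∫ ξ in (0:ℝ)..1, ζ ξ t ⬝ᵥ (P.Q ξ *ᵥ ζ ξ t))
      (2 * ∫ ξ in (0:ℝ)..1, ζt ξ t ⬝ᵥ (P.Q ξ *ᵥ ζ ξ t)) t := by
  have hF := contDotQ P (g := fun p : ℝ × ℝ => p.1) continuous_fst hζc hζc
  have hF' := (continuousOn_const (c := (2:ℝ))).mul
    (contDotQ P (g := fun p : ℝ × ℝ => p.1) continuous_fst hζtc hζc)
  obtain ⟨C, hC⟩ := (isCompact_Icc.prod isCompact_Icc).exists_bound_of_continuousOn hF'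
  have hsl : ∀ t ∈ Icc (0:ℝ) T, ContinuousOn (fun ξ => ζ ξ t ⬝ᵥ (P.Q ξ *ᵥ ζ ξ t)) (Icc 0 1) :=
    fun t ht => hF.comp (f := fun ξ : ℝ => (ξ, t)) (by fun_prop) (fun ξ hξ => ⟨hξ, ht⟩)
  have hsl' : ∀ t ∈ Icc (0:ℝ) T,
      ContinuousOn (fun ξ => 2 * (ζt ξ t ⬝ᵥ (P.Q ξ *ᵥ ζ ξ t))) (Icc 0 1) :=
    fun t ht => hF'.comp (f := fun ξ : ℝ => (ξ, t)) (by fun_prop) (fun ξ hξ => ⟨hξ, ht⟩)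
  intro t ht
  have hs : Ioo (0:ℝ) T ∈ nhds t := Ioo_mem_nhds ht.1 ht.2
  rw [← intervalIntegral.integral_const_mul]
  refine (intervalIntegral.hasDerivAt_integral_of_dominated_loc_of_deriv_le
    (F := fun t ξ => ζ ξ t ⬝ᵥ (P.Q ξ *ᵥ ζ ξ t))
    (F' := fun t ξ => 2 * (ζt ξ t ⬝ᵥ (P.Q ξ *ᵥ ζ ξ t)))
    (bound := fun _ => C) hs ?_ ?_ ?_ ?_ ?_ ?_).2
  · filter_upwards [hs] with t ht
    rw [uIoc_of_le zero_le_one]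
    exact ((hsl t (Ioo_subset_Icc_self ht)).mono
      Ioc_subset_Icc_self).aestronglyMeasurable measurableSet_Ioc
  · exact (hsl t (Ioo_subset_Icc_self ht)).intervalIntegrable_of_Icc zero_le_one
  · rw [uIoc_of_le zero_le_one]
    exact ((hsl' t (Ioo_subset_Icc_self ht)).mono
      Ioc_subset_Icc_self).aestronglyMeasurable measurableSet_Ioc
  · refine Filter.Eventually.of_forall fun ξ hξ x hx => ?_
    rw [uIoc_of_le zero_le_one] at hξ
    exact hC (ξ, x) ⟨Ioc_subset_Icc_self hξ, Ioo_subset_Icc_self hx⟩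
  · simp
  · refine Filter.Eventually.of_forall fun ξ hξ x hx => ?_
    rw [uIoc_of_le zero_le_one] at hξ
    have hd := (hζt ξ (Ioc_subset_Icc_self hξ) x (Ioo_subset_Icc_self hx)).hasDerivAt
      (Icc_mem_nhds hx.1 hx.2)
    rw [hasDerivAt_pi] at hd
    have := ((hd 0).mul ((hd 0).const_mul (qd P ξ 0))).add
      ((hd 1).mul ((hd 1).const_mul (qd P ξ 1)))
    simp only [Q_eq, dotProduct, Fin.sum_univ_two, Matrix.mulVec_diagonal]
    refine HasDerivAt.congr_deriv this ?_
    ring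

/-- closed-loop exponential decay in the linear case `θ = 0`: along the
closed-loop backstepping target system, the Lyapunov functional
`V(t) = ½‖X_δ(t)‖² + (1/2γ₁)∫₀¹ ζᵀQζ dξ` satisfies `V(t) ≤ V(0)e^{−γt}`. -/
theorem statement14 (P : TireParams) (m Iz l1 l2 : ℝ)
    (hm : 0 < m) (hIz : 0 < Iz) (hl1 : 0 < l1) (hl2 : 0 < l2)
    (ω : ℝ) (hω : 0 < ω) (h1 : Assumption1 P ω)
    (q : ℝ) (hq : 0 < q)
    (M M' : ℝ → Mat2) (N : Mat2) (hM : IsC1MatOn01 M M') (hM0 : M 0 = 0)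
    (hMnorm : (∫ ξ in (0:ℝ)..1, P.K1 ξ * M ξ) = (1 : Mat2))
    (hMode : ∀ ξ ∈ Ioo (0:ℝ) 1,
      P.Λmat * M' ξ = (KopM P.K3 M + P.K4 * M 1) + P.Hmat * N)
    (γ₁ lamBar γ : ℝ)
    (hγ₁ : γ₁ = q / ω *
      opNorm2 ((G1mat m Iz l1 l2)⁻¹ * (A1mat P.vx + q • (1 : Mat2))) ^ 2 *
        sSup ((fun ξ => opNorm2 ((M ξ)ᵀ * P.Q ξ)) '' Icc (0:ℝ) 1) ^ 2)
    (hlamBar : lamBar = sSup ((fun ξ => sSup (spectrum ℝ (P.Q ξ))) '' Icc (0:ℝ) 1))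
    (hγ : γ = min q (ω / lamBar))
    (T : ℝ) (hT : 0 < T)
    (ζ ζξ ζt : ℝ → ℝ → Vec2) (Xδ : ℝ → Vec2)
    (hX : ∀ t ∈ Icc (0:ℝ) T,
      HasDerivWithinAt Xδ
        (-q • Xδ t + (G1mat m Iz l1 l2).mulVec (P.K1op (fun ξ => ζ ξ t)))
        (Icc (0:ℝ) T) t)
    (hζξ : ∀ t ∈ Icc (0:ℝ) T, ∀ ξ ∈ Icc (0:ℝ) 1,
      HasDerivWithinAt (fun s => ζ s t) (ζξ ξ t) (Icc (0:ℝ) 1) ξ)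
    (hζt : ∀ ξ ∈ Icc (0:ℝ) 1, ∀ t ∈ Icc (0:ℝ) T,
      HasDerivWithinAt (fun s => ζ ξ s) (ζt ξ t) (Icc (0:ℝ) T) t)
    (hζc : ContinuousOn (fun p : ℝ × ℝ => ζ p.1 p.2) (Icc (0:ℝ) 1 ×ˢ Icc (0:ℝ) T))
    (hζξc : ContinuousOn (fun p : ℝ × ℝ => ζξ p.1 p.2) (Icc (0:ℝ) 1 ×ˢ Icc (0:ℝ) T))
    (hζtc : ContinuousOn (fun p : ℝ × ℝ => ζt p.1 p.2) (Icc (0:ℝ) 1 ×ˢ Icc (0:ℝ) T))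
    (hbc : ∀ t ∈ Icc (0:ℝ) T, ζ 0 t = 0)
    (hpde : ∀ ξ ∈ Ioo (0:ℝ) 1, ∀ t ∈ Ioo (0:ℝ) T,
      ζt ξ t + (P.Λmat).mulVec (ζξ ξ t) =
        P.K3op (fun s => ζ s t) -
          (P.Hmat).mulVec
            (((G1mat m Iz l1 l2)⁻¹ * (A1mat P.vx + q • (1 : Mat2)) *
                G1mat m Iz l1 l2)ᵀ.mulVec (KMop P M (fun s => ζ s t)) +
              γ₁ • (G1mat m Iz l1 l2)ᵀ.mulVec (Xδ t)) +
          (M ξ).mulVec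
            (((G1mat m Iz l1 l2)⁻¹ * (A1mat P.vx + q • (1 : Mat2))).mulVec
              ((G1mat m Iz l1 l2).mulVec (P.K1op (fun s => ζ s t)) - q • Xδ t))) :
    ∀ t ∈ Icc (0:ℝ) T,
      (1/2) * (∑ i, (Xδ t i) ^ 2) +
          1 / (2 * γ₁) * ∫ ξ in (0:ℝ)..1, ζ ξ t ⬝ᵥ (P.Q ξ).mulVec (ζ ξ t) ≤
        ((1/2) * (∑ i, (Xδ 0 i) ^ 2) +
            1 / (2 * γ₁) * ∫ ξ in (0:ℝ)..1, ζ ξ 0 ⬝ᵥ (P.Q ξ).mulVec (ζ ξ 0)) *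
          Real.exp (-γ * t) := by
  have hMc : ContinuousOn M (Icc (0:ℝ) 1) := fun x hx => (hM.1 x hx).continuousWithinAt
  set G := G1mat m Iz l1 l2 with hG
  set B := G⁻¹ * (A1mat P.vx + q • (1 : Mat2)) with hB
  set S := sSup ((fun ξ => opNorm2 ((M ξ)ᵀ * P.Q ξ)) '' Icc (0:ℝ) 1) with hS
  have hbdd : BddAbove ((fun ξ => opNorm2 ((M ξ)ᵀ * P.Q ξ)) '' Icc (0:ℝ) 1) :=
    (isCompact_Icc.image_of_continuousOn
      (opNorm2_cont.comp_continuousOn (contMQ P hMc))).bddAbove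
  have hSle : ∀ ξ ∈ Icc (0:ℝ) 1, opNorm2 ((M ξ)ᵀ * P.Q ξ) ≤ S := fun ξ hξ =>
    le_csSup hbdd ⟨ξ, hξ, rfl⟩
  have hSpos : 0 < S := by
    have : ∃ ξ ∈ Icc (0:ℝ) 1, M ξ ≠ 0 := by
      by_contra hc
      push Not at hc
      have h0 : (∫ ξ in (0:ℝ)..1, P.K1 ξ * M ξ) = ∫ ξ in (0:ℝ)..1, (0 : Mat2) := by
        apply intervalIntegral.integral_congr
        intro ξ hξ
        rw [uIcc_of_le zero_le_one] at hξ
        simp [hc ξ hξ]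
      rw [h0, intervalIntegral.integral_zero] at hMnorm
      exact zero_ne_one hMnorm
    obtain ⟨ξ, hξ, hne⟩ := this
    refine lt_of_lt_of_le (opNorm2_pos ?_) (hSle ξ hξ)
    intro h0
    apply hne
    ext i j
    have := congrFun (congrFun h0 j) i
    rw [Q_eq, Matrix.mul_diagonal] at this
    simpa [(qd_pos P ξ i).ne'] using this
  have hBpos : 0 < opNorm2 B := by
    apply opNorm2_pos
    intro h0
    have hdet : IsUnit G.det := by
      rw [isUnit_iff_ne_zero, hG, G1mat, Matrix.det_fin_two]
      simp
      have : 0 < m⁻¹ * (l2 / Iz) + m⁻¹ * (l1 / Iz) := by positivity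
      intro h
      rw [neg_div] at h
      linarith
    have h2 : G * B = 0 := by rw [h0, mul_zero]
    rw [hB, ← mul_assoc, Matrix.mul_nonsing_inv _ hdet, one_mul] at h2
    have h3 := congrFun (congrFun h2 0) 0
    simp [A1mat] at h3
    exact hq.ne' h3
  have hdecay : ∀ t ∈ Ioo (0:ℝ) T, Xδ t ⬝ᵥ (-q • Xδ t + G *ᵥ P.K1op (fun ξ => ζ ξ t)) +
      1 / γ₁ * (∫ ξ in (0:ℝ)..1, ζt ξ t ⬝ᵥ (P.Q ξ *ᵥ ζ ξ t)) ≤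
      -γ * (1 / 2 * (Xδ t ⬝ᵥ Xδ t) +
        1 / (2 * γ₁) * ∫ ξ in (0:ℝ)..1, ζ ξ t ⬝ᵥ (P.Q ξ *ᵥ ζ ξ t)) := by
    intro t ht
    have ht' := Ioo_subset_Icc_self ht
    refine energy_ineq P M (fun ξ => ζ ξ t) (fun ξ => ζξ ξ t) (fun ξ => ζt ξ t) (Xδ t) G B
      ω q (opNorm2 B ^ 2) (S ^ 2) γ₁ lamBar γ hω hq (by positivity) (by positivity) hγ₁ h1 hMc
      ⟨fun ξ hξ => hζξ t ht' ξ hξ, ?_⟩ (hbc t ht') (opNorm2_bound B) ?_ ?_ hγ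
      (fun ξ hξ => hpde ξ hξ t ht)
    · exact hζξc.comp (f := fun ξ : ℝ => (ξ, t)) (by fun_prop) (fun ξ hξ => ⟨hξ, ht'⟩)
    · intro ξ hξ x
      refine (opNorm2_bound _ x).trans ?_
      have hxx : 0 ≤ x ⬝ᵥ x := by
        simp only [dotProduct, Fin.sum_univ_two]
        nlinarith [mul_self_nonneg (x 0), mul_self_nonneg (x 1)]
      have := hSle ξ hξ
      have h0 : 0 ≤ opNorm2 ((M ξ)ᵀ * P.Q ξ) := norm_nonneg _
      gcongr
    · intro ξ hξ i
      rw [hlamBar]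
      exact qd_le_lamBar P hξ i
  have hEc := energy_cont P T ζ hζc
  have hEd := energy_deriv P T ζ ζt hζc hζtc hζt
  set E : ℝ → ℝ := fun t => ∫ ξ in (0:ℝ)..1, ζ ξ t ⬝ᵥ (P.Q ξ *ᵥ ζ ξ t) with hE
  have hXc : ContinuousOn Xδ (Icc 0 T) := fun t ht => (hX t ht).continuousWithinAt
  have hXd : ∀ t ∈ Ioo (0:ℝ) T, HasDerivAt (fun t => Xδ t ⬝ᵥ Xδ t)
      (2 * (Xδ t ⬝ᵥ (-q • Xδ t + G *ᵥ P.K1op (fun ξ => ζ ξ t)))) t := by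
    intro t ht
    have hd := (hX t (Ioo_subset_Icc_self ht)).hasDerivAt (Icc_mem_nhds ht.1 ht.2)
    rw [hasDerivAt_pi] at hd
    have := ((hd 0).mul (hd 0)).add ((hd 1).mul (hd 1))
    simp only [dotProduct, Fin.sum_univ_two]
    refine HasDerivAt.congr_deriv this ?_
    simp only [Pi.add_apply]
    ring
  set V : ℝ → ℝ := fun t => 1 / 2 * (Xδ t ⬝ᵥ Xδ t) + 1 / (2 * γ₁) * E t with hV
  have hVc : ContinuousOn V (Icc 0 T) :=
    (continuousOn_const.mul (contDot hXc hXc)).add (continuousOn_const.mul hEc)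
  have hWd : ∀ t ∈ Ioo (0:ℝ) T, ∃ d ≤ 0, HasDerivAt (fun t => V t * Real.exp (γ * t)) d t := by
    intro t ht
    have hVd := ((hXd t ht).const_mul (1 / 2)).add ((hEd t ht).const_mul (1 / (2 * γ₁)))
    have hexp : HasDerivAt (fun t => Real.exp (γ * t)) (Real.exp (γ * t) * (γ * 1)) t :=
      ((hasDerivAt_id t).const_mul γ).exp
    refine ⟨_, ?_, hVd.mul hexp⟩
    have hd := hdecay t ht
    have hep := Real.exp_pos (γ * t)
    have key : (1 / 2 * (2 * (Xδ t ⬝ᵥ (-q • Xδ t + G *ᵥ P.K1op (fun ξ => ζ ξ t)))) +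
      1 / (2 * γ₁) * (2 * ∫ ξ in (0:ℝ)..1, ζt ξ t ⬝ᵥ (P.Q ξ *ᵥ ζ ξ t))) + γ * V t ≤ 0 := by
      have e : 1 / (2 * γ₁) * (2 * ∫ ξ in (0:ℝ)..1, ζt ξ t ⬝ᵥ (P.Q ξ *ᵥ ζ ξ t)) =
        1 / γ₁ * ∫ ξ in (0:ℝ)..1, ζt ξ t ⬝ᵥ (P.Q ξ *ᵥ ζ ξ t) := by
        rw [← mul_assoc]
        congr 1
        rw [one_div, mul_inv]
        ring
      rw [e]
      simp only [hV, hE]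
      linarith
    have := mul_nonpos_of_nonpos_of_nonneg key hep.le
    refine le_trans (le_of_eq ?_) this
    simp only [hV, Pi.add_apply]
    ring
  have hanti : AntitoneOn (fun t => V t * Real.exp (γ * t)) (Icc 0 T) := by
    apply antitoneOn_of_deriv_nonpos (convex_Icc 0 T)
    · exact hVc.mul (by fun_prop)
    · rw [interior_Icc]
      intro t ht
      obtain ⟨d, _, hd⟩ := hWd t ht
      exact hd.differentiableAt.differentiableWithinAt
    · rw [interior_Icc]
      intro t ht
      obtain ⟨d, h0, hd⟩ := hWd t ht
      rw [hd.deriv]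
      exact h0
  intro t ht
  have hfin := hanti (left_mem_Icc.2 hT.le) ht ht.1
  have hxx : ∀ t, ∑ i, (Xδ t i) ^ 2 = Xδ t ⬝ᵥ Xδ t := by
    intro t
    simp [dotProduct, pow_two]
  rw [hxx, hxx]
  simp only [mul_zero, Real.exp_zero, mul_one] at hfin
  change V t ≤ V 0 * Real.exp (-γ * t)
  calc V t = V t * Real.exp (γ * t) * Real.exp (-γ * t) := by
        rw [mul_assoc, ← Real.exp_add]
        simp
    _ ≤ V 0 * Real.exp (-γ * t) := by gcongr
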